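/- arXiv:2304.14150 — 5 statements merged into one kernel-verified Lean document; each statement's English description precedes it below -/
import Mathlib

section
/- In the field of formal Laurent series K((z)), the series X(z) and Y(z) built from the Weierstrass recurrence satisfy the short Weierstrass equation: Y(z)^2 = X(z)^3 + a·X(z) + b. -/
/-- The Weierstrass recurrence: `c 2 = -a/5`, `c 3 = -b/7`, and for `l ≥ 4`,
`c l = (3 / ((2l+1)(l-3))) * ∑_{s=2}^{l-2} c s * c (l-s)`. -/
def WeierstrassRec {K : Type*} [Field K] (a b : K) (c : ℕ → K) : Prop :=
  c 2 = -a / 5 ∧ c 3 = -b / 7 ∧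
    ∀ l : ℕ, 4 ≤ l →
      c l = 3 / ((2 * (l : K) + 1) * ((l : K) - 3)) *
        ∑ s ∈ Finset.Icc 2 (l - 2), c s * c (l - s)

/-- `X` is the formal Laurent series `z⁻² + ∑_{l ≥ 2} c l · z^(2l-2)`
(the expansion of the Weierstrass ℘-function). -/
def IsWeierstrassX {K : Type*} [Field K] (c : ℕ → K) (X : LaurentSeries K) : Prop :=
  X.coeff (-2) = 1 ∧ (∀ l : ℕ, 2 ≤ l → X.coeff (2 * (l : ℤ) - 2) = c l) ∧
    ∀ n : ℤ, n ≠ -2 → (∀ l : ℕ, 2 ≤ l → n ≠ 2 * (l : ℤ) - 2) → X.coeff n = 0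

/-- `Y` is the formal Laurent series `-z⁻³ + ∑_{l ≥ 2} (l-1) · c l · z^(2l-3)`
(the expansion of `(1/2)℘′`). -/
def IsWeierstrassY {K : Type*} [Field K] (c : ℕ → K) (Y : LaurentSeries K) : Prop :=
  Y.coeff (-3) = -1 ∧ (∀ l : ℕ, 2 ≤ l → Y.coeff (2 * (l : ℤ) - 3) = ((l : K) - 1) * c l) ∧
    ∀ n : ℤ, n ≠ -3 → (∀ l : ℕ, 2 ≤ l → n ≠ 2 * (l : ℤ) - 3) → Y.coeff n = 0

/-- Coefficients of the auxiliary series. -/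
def wsP {K : Type*} [Field K] (c : ℕ → K) : ℕ → K
  | 0 => 1
  | 1 => 0
  | (n + 2) => c (n + 2)

lemma wsP_sq {K : Type*} [Field K] (c : ℕ → K) (m : ℕ) :
    PowerSeries.coeff (m + 4) (PowerSeries.mk (wsP c) * PowerSeries.mk (wsP c)) =
      2 * c (m + 4) + ∑ s ∈ Finset.Icc 2 (m + 2), c s * c (m + 4 - s) := by
  have h : Finset.Icc 2 (m + 2) = Finset.Ico 2 (m + 3) := by
    ext x; simp only [Finset.mem_Icc, Finset.mem_Ico]; omega
  rw [h, Finset.sum_Ico_eq_sum_range, PowerSeries.coeff_mul,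
    Finset.Nat.sum_antidiagonal_eq_sum_range_succ_mk]
  simp only [PowerSeries.coeff_mk]
  rw [Finset.sum_range_succ, Finset.sum_range_succ, Finset.sum_range_succ', Finset.sum_range_succ']
  have e : ∑ k ∈ Finset.range (m + 2 - 1), wsP c (k + 1 + 1) * wsP c (m + 4 - (k + 1 + 1)) =
      ∑ k ∈ Finset.range (m + 3 - 2), c (2 + k) * c (m + 4 - (2 + k)) := by
    apply Finset.sum_congr (by congr 1)
    intro k hk
    have hk' := Finset.mem_range.mp hk
    obtain ⟨j, hj⟩ : ∃ j, m + 4 - (k + 1 + 1) = j + 2 := ⟨m - k, by omega⟩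
    have : m + 4 - (2 + k) = j + 2 := by omega
    rw [hj, this, add_comm 2 k]
    rfl
  have e1 : m + 1 - m = 1 := by omega
  simp only [Nat.reduceSubDiff] at e ⊢
  simp only [e1, Nat.sub_self, wsP]
  rw [← e]
  simp only [wsP]
  ring

lemma ws_ode {K : Type*} [Field K] [CharZero K] (a b : K) (c : ℕ → K)
    (hc : WeierstrassRec a b c) (l : ℕ) :
    (2 * (l : K) - 3) * (2 * l - 2) * wsP c l =
      6 * PowerSeries.coeff l (PowerSeries.mk (wsP c) * PowerSeries.mk (wsP c)) +
        2 * a * (if l = 2 then 1 else 0) := by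
  obtain ⟨h2, h3, h⟩ := hc
  match l with
  | 0 => simp [PowerSeries.coeff_mul, wsP]; norm_num
  | 1 => simp [PowerSeries.coeff_mul, wsP, Finset.Nat.antidiagonal_succ]
  | 2 =>
    simp [PowerSeries.coeff_mul, wsP, Finset.Nat.antidiagonal_succ, h2]
    field_simp
    ring
  | 3 =>
    simp [PowerSeries.coeff_mul, wsP, Finset.Nat.antidiagonal_succ, h3]
    ring
  | (m + 4) =>
    rw [wsP_sq]
    have := h (m + 4) (by omega)
    have e : m + 4 - 2 = m + 2 := by omega
    rw [e] at this
    have n1 : (2 * ((m + 4 : ℕ) : K) + 1) ≠ 0 := by norm_cast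
    have n2 : (((m + 4 : ℕ) : K) - 3) ≠ 0 := by
      have : ((m + 1 : ℕ) : K) ≠ 0 := by norm_cast
      intro h; apply this; push_cast at h ⊢; linear_combination h
    generalize (∑ s ∈ Finset.Icc 2 (m + 2), c s * c (m + 4 - s)) = S at *
    have key : (2 * ((m + 4 : ℕ) : K) + 1) * (((m + 4 : ℕ) : K) - 3) * c (m + 4) = 3 * S := by
      rw [this]; field_simp
    have : ¬ (m + 4 = 2) := by omega
    simp only [wsP, this, if_false]
    linear_combination 2 * key

lemma ws_curve {K : Type*} [Field K] [CharZero K] (a b : K) (c : ℕ → K)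
    (hc : WeierstrassRec a b c) :
    (PowerSeries.mk (fun n => ((n : K) - 1) * wsP c n)) ^ 2 =
      (PowerSeries.mk (wsP c)) ^ 3 + PowerSeries.C a * PowerSeries.X ^ 2 * PowerSeries.mk (wsP c)
        + PowerSeries.C b * PowerSeries.X ^ 3 := by
  have hode := ws_ode a b c hc
  obtain ⟨-, h3, -⟩ := hc
  set p := PowerSeries.mk (wsP c) with hp
  set q := PowerSeries.mk (fun n => ((n : K) - 1) * wsP c n) with hq
  let d := PowerSeries.derivative K
  have hD : ∀ (f : PowerSeries K) (n : ℕ), PowerSeries.coeff n (PowerSeries.X * d f) =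
      n * PowerSeries.coeff n f := by
    intro f n
    cases n with
    | zero => simp
    | succ n =>
      rw [PowerSeries.coeff_succ_X_mul, PowerSeries.coeff_derivative]; push_cast; ring
  have hdp : PowerSeries.X * d p = q + p := by
    ext n; rw [hD]; simp [hp, hq]; ring
  have hdq : 2 * (PowerSeries.X * d q) = 3 * q + 3 * (p * p)
      + PowerSeries.C a * PowerSeries.X ^ 2 := by
    ext n
    have e2 : (2 : PowerSeries K) = PowerSeries.C 2 := (map_ofNat PowerSeries.C 2).symm
    have e3 : (3 : PowerSeries K) = PowerSeries.C 3 := (map_ofNat PowerSeries.C 3).symm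
    rw [e2, e3]
    simp only [map_add, PowerSeries.coeff_C_mul, hD, PowerSeries.coeff_X_pow]
    have := hode n
    simp only [hq, PowerSeries.coeff_mk]
    linear_combination this / 2
  set F := q ^ 2 - (p ^ 3 + PowerSeries.C a * PowerSeries.X ^ 2 * p
        + PowerSeries.C b * PowerSeries.X ^ 3) with hF
  have dC : ∀ r : K, d (PowerSeries.C r) = 0 := fun r => PowerSeries.derivative_C
  have dX : d PowerSeries.X = 1 := PowerSeries.derivative_X
  have hDF : PowerSeries.X * d F = 3 * F := by
    simp only [hF, map_sub, map_add, Derivation.leibniz, Derivation.leibniz_pow, dC, dX,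
      smul_eq_mul, nsmul_eq_mul]
    push_cast
    simp only [Nat.add_one_sub_one, pow_one, Nat.reduceSub]
    linear_combination q * hdq - (3 * p ^ 2 + PowerSeries.C a * PowerSeries.X ^ 2) * hdp
  have hF0 : F = 0 := by
    ext n
    have h1 := hD F n
    have e3 : (3 : PowerSeries K) = PowerSeries.C 3 := (map_ofNat PowerSeries.C 3).symm
    rw [hDF, e3, PowerSeries.coeff_C_mul] at h1
    by_cases hn : n = 3
    · subst hn
      simp [hF, hp, hq, pow_succ, PowerSeries.coeff_mul, wsP, Finset.Nat.antidiagonal_succ,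
        PowerSeries.coeff_C, PowerSeries.coeff_X, h3]
      field_simp
      ring
    · have : (3 - (n : K)) ≠ 0 := by
        rw [sub_ne_zero]; exact_mod_cast Ne.symm hn
      have h2 : (3 - (n : K)) * PowerSeries.coeff n F = 0 := by linear_combination h1
      simpa [this] using h2
  exact sub_eq_zero.mp hF0

/-- The embedding `n ↦ 2 n`. -/
def wsTwo : ℕ →+ ℤ where
  toFun n := 2 * (n : ℤ)
  map_zero' := by simp
  map_add' x y := by push_cast; ring

/-- The substitution `t ↦ z^2`. -/
noncomputable def wsPhi (K : Type*) [Field K] : PowerSeries K →+* LaurentSeries K :=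
  (HahnSeries.embDomainRingHom wsTwo (fun x y h => by simpa [wsTwo] using h)
    (fun x y => by simp [wsTwo])).comp (HahnSeries.toPowerSeries.symm : PowerSeries K ≃+* _).toRingHom

lemma wsPhi_even {K : Type*} [Field K] (f : PowerSeries K) (n : ℕ) :
    (wsPhi K f).coeff (2 * (n : ℤ)) = PowerSeries.coeff n f := by
  have := HahnSeries.embDomain_coeff (f := ⟨⟨wsTwo, fun x y h => by simpa [wsTwo] using h⟩,
    fun {x y} => by simp [wsTwo]⟩) (x := HahnSeries.toPowerSeries.symm f) (a := n)
  rw [HahnSeries.coeff_toPowerSeries_symm] at this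
  exact this

lemma wsPhi_other {K : Type*} [Field K] (f : PowerSeries K) (k : ℤ)
    (h : ∀ n : ℕ, k ≠ 2 * (n : ℤ)) :
    (wsPhi K f).coeff k = 0 := by
  apply HahnSeries.embDomain_of_notMem_range
  rintro ⟨n, hn⟩
  exact h n hn.symm

lemma wsPhi_C {K : Type*} [Field K] (r : K) :
    wsPhi K (PowerSeries.C r) = HahnSeries.C r := by
  ext k
  by_cases h : ∃ n : ℕ, k = 2 * (n : ℤ)
  · obtain ⟨n, rfl⟩ := h
    rw [wsPhi_even]
    simp [PowerSeries.coeff_C, HahnSeries.coeff_single]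
  · push Not at h
    rw [wsPhi_other _ _ h]
    have := h 0
    simp at this
    simp [HahnSeries.coeff_single, this]

lemma wsPhi_X {K : Type*} [Field K] :
    wsPhi K PowerSeries.X = HahnSeries.single 2 1 := by
  ext k
  by_cases h : ∃ n : ℕ, k = 2 * (n : ℤ)
  · obtain ⟨n, rfl⟩ := h
    rw [wsPhi_even]
    have : (2 * (n : ℤ) = 2) ↔ n = 1 := by omega
    simp [PowerSeries.coeff_X, HahnSeries.coeff_single, this]
  · push Not at h
    rw [wsPhi_other _ _ h]
    have := h 1
    simp at this
    simp [HahnSeries.coeff_single, this]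

/-- In `K((z))`, the series `X` and `Y` built from the Weierstrass recurrence satisfy
the short Weierstrass equation `Y² = X³ + a·X + b`. -/
theorem weierstrass_series_satisfy_curve_equation
    {K : Type*} [Field K] [CharZero K] (a b : K) (c : ℕ → K)
    (hc : WeierstrassRec a b c) (X Y : LaurentSeries K)
    (hX : IsWeierstrassX c X) (hY : IsWeierstrassY c Y) :
    Y ^ 2 = X ^ 3 + HahnSeries.C a * X + HahnSeries.C b := by
  have hcurve := congrArg (wsPhi K) (ws_curve a b c hc)
  simp only [map_add, map_mul, map_pow, wsPhi_C, wsPhi_X] at hcurve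
  obtain ⟨x1, x2, x3⟩ := hX
  obtain ⟨y1, y2, y3⟩ := hY
  set z : LaurentSeries K := HahnSeries.single 1 1 with hz
  have hz2 : (HahnSeries.single 2 1 : LaurentSeries K) = z ^ 2 := by
    rw [hz, HahnSeries.single_pow]; simp
  have hz3 : (HahnSeries.single 3 1 : LaurentSeries K) = z ^ 3 := by
    rw [hz, HahnSeries.single_pow]; simp
  have hz0 : z ≠ 0 := HahnSeries.single_ne_zero one_ne_zero
  have hP : wsPhi K (PowerSeries.mk (wsP c)) = z ^ 2 * X := by
    rw [← hz2]
    ext k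
    have hk : k = (k - 2) + 2 := by ring
    conv_rhs => rw [hk, HahnSeries.coeff_single_mul_add, one_mul]
    by_cases h : ∃ n : ℕ, k = 2 * (n : ℤ)
    · obtain ⟨n, rfl⟩ := h
      rw [wsPhi_even, PowerSeries.coeff_mk]
      match n with
      | 0 => simpa [wsP] using x1.symm
      | 1 => exact (x3 _ (by norm_num) (by intro l hl; push_cast; omega)).symm
      | (m + 2) => exact (x2 (m + 2) (by omega)).symm
    · push Not at h
      rw [wsPhi_other _ _ h, x3]
      · have := h 0; push_cast at this; omega
      · intro l hl; have := h l; omega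
  have hQ : wsPhi K (PowerSeries.mk (fun n => ((n : K) - 1) * wsP c n)) = z ^ 3 * Y := by
    rw [← hz3]
    ext k
    have hk : k = (k - 3) + 3 := by ring
    conv_rhs => rw [hk, HahnSeries.coeff_single_mul_add, one_mul]
    by_cases h : ∃ n : ℕ, k = 2 * (n : ℤ)
    · obtain ⟨n, rfl⟩ := h
      rw [wsPhi_even, PowerSeries.coeff_mk]
      match n with
      | 0 => simpa [wsP] using y1.symm
      | 1 =>
        rw [y3 _ (by norm_num) (by intro l hl; push_cast; omega)]
        simp
      | (m + 2) => exact (y2 (m + 2) (by omega)).symm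
    · push Not at h
      rw [wsPhi_other _ _ h, y3]
      · have := h 0; push_cast at this; omega
      · intro l hl; have := h l; omega
  rw [hP, hQ, hz2] at hcurve
  apply mul_left_cancel₀ (pow_ne_zero 6 hz0)
  linear_combination hcurve
end

section
/- The Weierstrass recurrence coefficients are uniquely determined by the curve equation: if d : ℕ → K is any sequence (indexed by l ≥ 2) such that the Laurent series X_d(z) = z^{-2} + Σ_{l≥2} d_l·z^{2l-2} and Y_d(z) = -z^{-3} + Σ_{l≥2} (l-1)·d_l·z^{2l-3} in K((z)) satisfy Y_d(z)^2 = X_d(z)^3 + a·X_d(z) + b, then d_l = c_l for all l ≥ 2, where c is the sequence given by the Weierstrass recurrence. -/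
/-- Substitution `w ↦ z²` from power series to Laurent series. -/
noncomputable def wEmb (K : Type*) [Field K] : PowerSeries K →+* LaurentSeries K :=
  (HahnSeries.embDomainRingHom
    ({ toFun := fun n => 2 * (n : ℤ), map_zero' := by simp, map_add' := by intro x y; push_cast; ring } : ℕ →+ ℤ)
    (by intro x y h; simp at h; exact h) (by intro x y; simp)).comp
    (RingEquiv.toRingHom HahnSeries.toPowerSeries.symm)

theorem wEmb_coeff {K : Type*} [Field K] (f : PowerSeries K) (n : ℕ) :
    (wEmb K f).coeff (2 * (n : ℤ)) = PowerSeries.coeff n f := by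
  exact HahnSeries.embDomain_mk_coeff (f := fun n : ℕ => 2 * (n : ℤ)) _ _

theorem wEmb_coeff_zero {K : Type*} [Field K] (f : PowerSeries K) (m : ℤ)
    (h : ∀ n : ℕ, m ≠ 2 * (n : ℤ)) : (wEmb K f).coeff m = 0 := by
  refine HahnSeries.embDomain_of_notMem_range ?_
  rintro ⟨n, hn⟩
  exact h n hn.symm

theorem wEmb_inj {K : Type*} [Field K] : Function.Injective (wEmb K) := by
  intro f g h
  ext n
  rw [← wEmb_coeff, ← wEmb_coeff, h]

theorem wEmb_C {K : Type*} [Field K] (r : K) :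
    wEmb K (PowerSeries.C r) = HahnSeries.C r := by
  ext m
  by_cases h : ∃ n : ℕ, m = 2 * (n : ℤ)
  · obtain ⟨n, rfl⟩ := h
    rw [wEmb_coeff, PowerSeries.coeff_C, HahnSeries.C_apply, HahnSeries.coeff_single]
    simp
  · push Not at h
    rw [wEmb_coeff_zero _ _ h, HahnSeries.C_apply, HahnSeries.coeff_single_of_ne]
    simpa using h 0

theorem wEmb_X {K : Type*} [Field K] :
    wEmb K PowerSeries.X = HahnSeries.single (2 : ℤ) (1 : K) := by
  ext m
  by_cases h : ∃ n : ℕ, m = 2 * (n : ℤ)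
  · obtain ⟨n, rfl⟩ := h
    rw [wEmb_coeff, PowerSeries.coeff_X, HahnSeries.coeff_single]
    congr 1
    apply propext
    constructor <;> intro h <;> omega
  · push Not at h
    rw [wEmb_coeff_zero _ _ h, HahnSeries.coeff_single_of_ne]
    simpa using h 1

theorem w_power_series {K : Type*} [Field K] [CharZero K] (a b : K) (f g : PowerSeries K)
    (hg : g = PowerSeries.X * PowerSeries.derivative K f - f) (hg0 : g ≠ 0)
    (h : g ^ 2 = f ^ 3 + PowerSeries.C a * PowerSeries.X ^ 2 * f
      + PowerSeries.C b * PowerSeries.X ^ 3) :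
    2 * (PowerSeries.X * PowerSeries.derivative K g) - 3 * g
      = 3 * (f * f) + PowerSeries.C a * PowerSeries.X ^ 2 := by
  have h2 := congrArg (PowerSeries.derivative K) h
  simp only [map_add, Derivation.leibniz, Derivation.leibniz_pow, PowerSeries.derivative_C,
    PowerSeries.derivative_X, smul_eq_mul, nsmul_eq_mul] at h2
  apply mul_left_cancel₀ hg0
  generalize PowerSeries.derivative K g = g' at *
  generalize PowerSeries.derivative K f = f' at *
  push_cast at h2
  norm_num at h2
  linear_combination PowerSeries.X * h2 - 3 * h - (3 * f ^ 2 + PowerSeries.C a * PowerSeries.X ^ 2) * hg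

theorem w_coeffs {K : Type*} [Field K] [CharZero K] (a b : K) (d : ℕ → K) (f g : PowerSeries K)
    (f0 : PowerSeries.coeff 0 f = 1) (f1 : PowerSeries.coeff 1 f = 0)
    (fd : ∀ l, 2 ≤ l → PowerSeries.coeff l f = d l)
    (hg : ∀ l : ℕ, PowerSeries.coeff l g = ((l : K) - 1) * PowerSeries.coeff l f)
    (h : g ^ 2 = f ^ 3 + PowerSeries.C a * PowerSeries.X ^ 2 * f
      + PowerSeries.C b * PowerSeries.X ^ 3) : WeierstrassRec a b d := by
  have hX : ∀ (p : PowerSeries K) (n : ℕ),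
      PowerSeries.coeff n (PowerSeries.X * PowerSeries.derivative K p)
        = n * PowerSeries.coeff n p := by
    intro p n
    cases n with
    | zero => simp
    | succ n => rw [PowerSeries.coeff_succ_X_mul, PowerSeries.coeff_derivative]; push_cast; ring
  have hg' : g = PowerSeries.X * PowerSeries.derivative K f - f := by
    ext n; rw [map_sub, hX, hg]; ring
  have hg0 : g ≠ 0 := by
    intro h0
    have := hg 0
    rw [h0, f0] at this
    simp at this
  have key := w_power_series a b f g hg' hg0 h
  have hk : ∀ l : ℕ, (2 * (l : K) - 3) * ((l : K) - 1) * PowerSeries.coeff l f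
      = 3 * PowerSeries.coeff l (f * f) + if l = 2 then a else 0 := by
    intro l
    have := congrArg (PowerSeries.coeff l) key
    rw [map_sub, map_add, ← map_ofNat (PowerSeries.C (R := K)) 2,
      ← map_ofNat (PowerSeries.C (R := K)) 3, PowerSeries.coeff_C_mul, PowerSeries.coeff_C_mul,
      PowerSeries.coeff_C_mul, PowerSeries.coeff_C_mul, hX, hg, PowerSeries.coeff_X_pow] at this
    rw [mul_ite, mul_one, mul_zero] at this
    linear_combination this
  have f2 := fd 2 le_rfl
  have f3 := fd 3 (by norm_num)
  refine ⟨?_, ?_, ?_⟩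
  · have := hk 2
    rw [PowerSeries.coeff_mul, Finset.Nat.sum_antidiagonal_eq_sum_range_succ_mk] at this
    simp [Finset.sum_range_succ, f0, f1, f2, -PowerSeries.coeff_zero_eq_constantCoeff] at this
    rw [eq_div_iff (by norm_num)]
    linear_combination -this
  · have g0 := hg 0
    have g1 := hg 1
    have g2 := hg 2
    have g3 := hg 3
    rw [f0] at g0
    rw [f1] at g1
    rw [f2] at g2
    rw [f3] at g3
    have := congrArg (PowerSeries.coeff 3) h
    rw [pow_two, pow_three, map_add, map_add, mul_assoc, PowerSeries.coeff_C_mul,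
      PowerSeries.coeff_C_mul, PowerSeries.coeff_X_pow] at this
    simp only [PowerSeries.coeff_mul, Finset.Nat.sum_antidiagonal_eq_sum_range_succ_mk,
      PowerSeries.coeff_X_pow] at this
    simp [Finset.sum_range_succ, f0, f1, f2, f3, g0, g1, g2, g3,
      -PowerSeries.coeff_zero_eq_constantCoeff] at this
    rw [eq_div_iff (by norm_num)]
    linear_combination -this
  · intro l hl
    have h1 := hk l
    rw [if_neg (by omega), fd l (by omega)] at h1
    obtain ⟨m, rfl⟩ : ∃ m, l = m + 4 := ⟨l - 4, by omega⟩
    have hs : PowerSeries.coeff (m + 4) (f * f)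
        = 2 * d (m + 4) + ∑ s ∈ Finset.Icc 2 (m + 4 - 2), d s * d (m + 4 - s) := by
      rw [PowerSeries.coeff_mul, Finset.Nat.sum_antidiagonal_eq_sum_range_succ_mk]
      rw [Finset.sum_range_succ, Finset.sum_range_succ, Finset.sum_range_succ',
        Finset.sum_range_succ']
      have e1 : m + 4 - (m + 3) = 1 := by omega
      have e2 : ∑ s ∈ Finset.Icc 2 (m + 4 - 2), d s * d (m + 4 - s)
          = ∑ k ∈ Finset.range (m + 1), PowerSeries.coeff (k + 1 + 1) f
            * PowerSeries.coeff (m + 4 - (k + 1 + 1)) f := by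
        rw [show Finset.Icc 2 (m + 4 - 2) = Finset.Ico 2 (m + 3) by ext; simp; omega,
          Finset.sum_Ico_eq_sum_range]
        apply Finset.sum_congr (by congr 1)
        intro k hk
        rw [Finset.mem_range] at hk
        rw [fd _ (by omega), fd _ (by omega), show 2 + k = k + 1 + 1 by omega]
      rw [e2]
      simp only [e1, Nat.sub_self, f0, f1, Nat.sub_zero, zero_add, fd (m + 4) (by omega)]
      ring
    rw [hs] at h1
    have n1 : (2 * ((m + 4 : ℕ) : K) + 1) ≠ 0 := by exact_mod_cast (by omega : 2 * (m + 4) + 1 ≠ 0)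
    have n2 : (((m + 4 : ℕ) : K) - 3) ≠ 0 := by
      have : ((m + 1 : ℕ) : K) ≠ 0 := by exact_mod_cast (by omega : m + 1 ≠ 0)
      intro h; apply this; push_cast at h ⊢; linear_combination h
    rw [div_mul_eq_mul_div, eq_div_iff (mul_ne_zero n1 n2)]
    linear_combination h1

theorem w_rec_unique {K : Type*} [Field K] (a b : K) (c d : ℕ → K)
    (hc : WeierstrassRec a b c) (hd : WeierstrassRec a b d) : ∀ l : ℕ, 2 ≤ l → d l = c l := by
  intro l
  induction l using Nat.strong_induction_on with
  | _ l ih =>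
    intro hl
    rcases (by omega : l = 2 ∨ l = 3 ∨ 4 ≤ l) with rfl | rfl | h
    · rw [hc.1, hd.1]
    · rw [hc.2.1, hd.2.1]
    · rw [hc.2.2 l h, hd.2.2 l h]
      congr 1
      apply Finset.sum_congr rfl
      intro s hs
      rw [Finset.mem_Icc] at hs
      rw [ih s (by omega) (by omega), ih (l - s) (by omega) (by omega)]

/-- Uniqueness of the Weierstrass recurrence coefficients: any sequence `d` (for `l ≥ 2`)
whose associated Laurent series `X_d, Y_d` satisfy `Y_d² = X_d³ + a·X_d + b`
coincides, for all `l ≥ 2`, with the sequence `c` given by the Weierstrass recurrence. -/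
theorem weierstrass_coefficients_unique
    {K : Type*} [Field K] [CharZero K] (a b : K) (c : ℕ → K)
    (hc : WeierstrassRec a b c) (d : ℕ → K) (Xd Yd : LaurentSeries K)
    (hXd : IsWeierstrassX d Xd) (hYd : IsWeierstrassY d Yd)
    (heq : Yd ^ 2 = Xd ^ 3 + HahnSeries.C a * Xd + HahnSeries.C b) :
    ∀ l : ℕ, 2 ≤ l → d l = c l := by
  classical
  apply w_rec_unique a b c d hc
  obtain ⟨x0, x1, x2⟩ := hXd
  obtain ⟨y0, y1, y2⟩ := hYd
  let f : PowerSeries K := PowerSeries.mk fun n => if n = 0 then 1 else if n = 1 then 0 else d n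
  let g : PowerSeries K := PowerSeries.mk fun n => ((n : K) - 1) * PowerSeries.coeff n f
  have hfX : HahnSeries.single (2 : ℤ) (1 : K) * Xd = wEmb K f := by
    ext m
    rw [HahnSeries.coeff_single_mul, one_mul]
    by_cases h : ∃ n : ℕ, m = 2 * (n : ℤ)
    · obtain ⟨n, rfl⟩ := h
      rw [wEmb_coeff, PowerSeries.coeff_mk]
      split_ifs with h0 h1
      · subst h0; simpa using x0
      · subst h1; apply x2 <;> intros <;> omega
      · exact x1 n (by omega)
    · push Not at h
      rw [wEmb_coeff_zero _ _ h]
      apply x2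
      · have := h 0; omega
      · intro l _; have := h l; omega
  have hgY : HahnSeries.single (3 : ℤ) (1 : K) * Yd = wEmb K g := by
    ext m
    rw [HahnSeries.coeff_single_mul, one_mul]
    by_cases h : ∃ n : ℕ, m = 2 * (n : ℤ)
    · obtain ⟨n, rfl⟩ := h
      rw [wEmb_coeff, PowerSeries.coeff_mk, PowerSeries.coeff_mk]
      split_ifs with h0 h1
      · subst h0; simpa using y0
      · subst h1; rw [mul_zero]; apply y2 <;> intros <;> omega
      · exact y1 n (by omega)
    · push Not at h
      rw [wEmb_coeff_zero _ _ h]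
      apply y2
      · have := h 0; omega
      · intro l _; have := h l; omega
  refine w_coeffs a b d f g (by simp [f]) (by simp [f]) ?_ (fun l => by simp [g]) ?_
  · intro l hl
    rw [PowerSeries.coeff_mk, if_neg (by omega), if_neg (by omega)]
  · apply wEmb_inj
    simp only [map_add, map_mul, map_pow, wEmb_C, wEmb_X, ← hfX, ← hgY]
    have e : HahnSeries.single (3 : ℤ) (1 : K) ^ 2 = HahnSeries.single (2 : ℤ) (1 : K) ^ 3 := by
      rw [HahnSeries.single_pow, HahnSeries.single_pow]; norm_num
    linear_combination (HahnSeries.single (2 : ℤ) (1 : K) ^ 3) * heq + Yd ^ 2 * e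
end

section
/- In K((z)), the Laurent series Y(z) is nonzero, and the series -X(z)/Y(z) equals z - (2a/5)·z^5 - (3b/7)·z^7 + O(z^9); precisely, for every integer n with 0 ≤ n ≤ 8, the coefficient of z^n in -X(z)/Y(z) is 1 if n = 1, is -2a/5 if n = 5, is -3b/7 if n = 7, and is 0 otherwise, and all coefficients of -X(z)/Y(z) in negative degrees vanish. -/
/-- In `K((z))`, `Y ≠ 0` and `-X/Y = z - (2a/5)·z⁵ - (3b/7)·z⁷ + O(z⁹)`: every
coefficient of `-X/Y` in degree `n ≤ 8` is `1` at `n = 1`, `-2a/5` at `n = 5`,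
`-3b/7` at `n = 7`, and `0` otherwise (in particular all coefficients in negative
degrees vanish). -/
theorem neg_X_div_Y_series_expansion
    {K : Type*} [Field K] [CharZero K] (a b : K) (c : ℕ → K)
    (hc : WeierstrassRec a b c) (X Y : LaurentSeries K)
    (hX : IsWeierstrassX c X) (hY : IsWeierstrassY c Y) :
    Y ≠ 0 ∧ ∀ n : ℤ, n ≤ 8 →
      (-X / Y).coeff n =
        if n = 1 then 1
        else if n = 5 then -(2 * a / 5)
        else if n = 7 then -(3 * b / 7)
        else 0 := by
  obtain ⟨h2, h3, -⟩ := hc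
  obtain ⟨hX0, hX1, hX2⟩ := hX
  obtain ⟨hY0, hY1, hY2⟩ := hY
  have hYne : Y ≠ 0 := by
    rintro rfl
    simp at hY0
  refine ⟨hYne, ?_⟩
  have x2 : X.coeff 2 = c 2 := by simpa using hX1 2 le_rfl
  have x4 : X.coeff 4 = c 3 := by simpa using hX1 3 (by norm_num)
  have y1 : Y.coeff 1 = c 2 := by
    have := hY1 2 le_rfl
    norm_num at this
    exact this
  have y3 : Y.coeff 3 = 2 * c 3 := by
    have := hY1 3 (by norm_num)
    norm_num at this
    exact this
  have xz : ∀ n : ℤ, n < 6 → n ≠ -2 → n ≠ 2 → n ≠ 4 → X.coeff n = 0 := by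
    intro n _ _ _ _
    exact hX2 n (by omega) (fun l hl => by omega)
  have yz : ∀ n : ℤ, n < 5 → n ≠ -3 → n ≠ 1 → n ≠ 3 → Y.coeff n = 0 := by
    intro n _ _ _ _
    exact hY2 n (by omega) (fun l hl => by omega)
  have yord : Y.order = -3 := by
    apply le_antisymm
    · exact HahnSeries.order_le_of_coeff_ne_zero (by rw [hY0]; simp)
    · by_contra! h
      exact HahnSeries.coeff_order_eq_zero.not.mpr hYne
        (yz _ (by omega) (by omega) (by omega) (by omega))
  set P : LaurentSeries K := HahnSeries.single 1 1 + HahnSeries.single 5 (-(2 * a / 5))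
    + HahnSeries.single 7 (-(3 * b / 7)) with hP
  set E : LaurentSeries K := -X / Y - P with hE
  have hEY : E * Y = -(X + P * Y) := by
    rw [hE, sub_mul, div_mul_cancel₀ _ hYne]; ring
  have sm : ∀ (k n : ℤ) (r : K), (HahnSeries.single k r * Y).coeff n = r * Y.coeff (n - k) := by
    intro k n r
    have := HahnSeries.coeff_single_mul_add (r := r) (x := Y) (a := n - k) (b := k)
    simpa using this
  have hW : ∀ n : ℤ, n < 6 → (E * Y).coeff n = 0 := by
    intro n hn
    rw [hEY, HahnSeries.coeff_neg, HahnSeries.coeff_add, hP, add_mul, add_mul,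
      HahnSeries.coeff_add, HahnSeries.coeff_add, sm, sm, sm, neg_eq_zero]
    by_cases hlt : n < -2
    · rw [xz n (by omega) (by omega) (by omega) (by omega),
        yz (n - 1) (by omega) (by omega) (by omega) (by omega),
        yz (n - 5) (by omega) (by omega) (by omega) (by omega),
        yz (n - 7) (by omega) (by omega) (by omega) (by omega)]
      simp
    · have : -2 ≤ n := by omega
      interval_cases n <;> norm_num [xz, yz, x2, x4, y1, y3, hX0, hY0, h2, h3] <;> ring
  have hE9 : ∀ n : ℤ, n < 9 → E.coeff n = 0 := by
    intro n hn
    by_cases hE0 : E = 0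
    · rw [hE0]; rfl
    have hne : E * Y ≠ 0 := mul_ne_zero hE0 hYne
    have ho := HahnSeries.order_mul hE0 hYne
    have h6 : 6 ≤ (E * Y).order := by
      by_contra! h
      exact HahnSeries.coeff_order_eq_zero.not.mpr hne (hW _ h)
    exact HahnSeries.coeff_eq_zero_of_lt_order (by omega)
  intro n hn
  have : -X / Y = P + E := by rw [hE]; ring
  rw [this, HahnSeries.coeff_add, hE9 n (by omega), hP, HahnSeries.coeff_add,
    HahnSeries.coeff_add, HahnSeries.coeff_single, HahnSeries.coeff_single,
    HahnSeries.coeff_single]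
  split_ifs <;> first | omega | simp
end

section
/- For an odd prime p, elements a, b of the p-adic integers ℤ_p, and the sequence c : ℕ → ℚ_p defined by the Weierstrass recurrence, for every z ∈ ℚ_p with ‖z‖_p ≤ 1/p the sequences l ↦ c_l·z^{2l-2} and l ↦ (l-1)·c_l·z^{2l-3} both tend to 0 in ℚ_p as l → ∞; in particular, the series Σ_{l≥2} c_l·z^{2l-2} and Σ_{l≥2} (l-1)·c_l·z^{2l-3} (the expansions of ℘(z) and (1/2)℘′(z) minus their principal parts) are summable in ℚ_p. -/
lemma wsp_W (q s t : ℕ) (hq : 3 ≤ q) (hs : 2 ≤ s) (ht : 2 ≤ t) :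
    ((4*s+2)/q - 1) + ((4*t+2)/q - 1) + (if q ∣ 2*(s+t)+1 then 1 else 0)
      ≤ (4*(s+t)+2)/q - 1 := by
  have hq0 : 0 < q := by omega
  have hA : (4*s+2)/q * q ≤ 4*s+2 := Nat.div_mul_le_self _ _
  have hB : (4*t+2)/q * q ≤ 4*t+2 := Nat.div_mul_le_self _ _
  have hmA : (4*s+2)/q ≤ (4*(s+t)+2)/q := Nat.div_le_div_right (by omega)
  have hmB : (4*t+2)/q ≤ (4*(s+t)+2)/q := Nat.div_le_div_right (by omega)
  generalize (4*s+2)/q = A at *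
  generalize (4*t+2)/q = B at *
  split_ifs with h
  · obtain ⟨j, hj⟩ := h
    have hG : (4*(s+t)+2)/q = 2*j := by
      rw [show 4*(s+t)+2 = q*(2*j) by linarith]
      exact Nat.mul_div_cancel_left _ hq0
    rw [hG]
    have hj0 : 1 ≤ j := by
      rcases Nat.eq_zero_or_pos j with h | h
      · subst h; omega
      · exact h
    have a1 : A < 2*j := by
      apply lt_of_mul_lt_mul_right (a := q) _ (Nat.zero_le _)
      nlinarith
    have b1 : B < 2*j := by
      apply lt_of_mul_lt_mul_right (a := q) _ (Nat.zero_le _)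
      nlinarith
    have ab : A + B < 2*j+1 := by
      apply lt_of_mul_lt_mul_right (a := q) _ (Nat.zero_le _)
      nlinarith
    omega
  · rcases Nat.eq_zero_or_pos A with h | h
    · omega
    rcases Nat.eq_zero_or_pos B with h' | h'
    · omega
    have : A + B - 1 ≤ (4*(s+t)+2)/q := by
      rw [Nat.le_div_iff_mul_le hq0, Nat.sub_mul, Nat.add_mul]
      omega
    omega

lemma wsp_U (q s t : ℕ) (hq : 3 ≤ q) (hs : 2 ≤ s) (ht : 2 ≤ t) :
    (s-3)/q + (t-3)/q + (if q ∣ (s+t)-3 then 1 else 0) ≤ ((s+t)-3)/q := by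
  have hq0 : 0 < q := by omega
  have hA : (s-3)/q * q ≤ s-3 := Nat.div_mul_le_self _ _
  have hB : (t-3)/q * q ≤ t-3 := Nat.div_mul_le_self _ _
  generalize (s-3)/q = A at *
  generalize (t-3)/q = B at *
  split_ifs with h
  · obtain ⟨j, hj⟩ := h
    rw [hj, Nat.mul_div_cancel_left _ hq0]
    have : A + B < j := by
      apply lt_of_mul_lt_mul_right (a := q) _ (Nat.zero_le _)
      have : j * q = s+t-3 := by rw [hj, mul_comm]
      rw [this, Nat.add_mul]
      omega
    omega
  · rw [Nat.le_div_iff_mul_le hq0]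
    simp only [add_zero, Nat.add_mul]
    omega

/-- exponent bound -/
def wspD (p k0 b l : ℕ) : ℕ :=
  ∑ k ∈ Finset.Ico k0 b, ((4*l+2)/p^k - 1) + ∑ k ∈ Finset.Ico 1 b, (l-3)/p^k

/-- divisor count -/
def wspN (p k0 b n : ℕ) : ℕ := ∑ k ∈ Finset.Ico k0 b, (if p^k ∣ n then 1 else 0)

lemma wspD_add (p k0 b s t : ℕ) (hp : 3 ≤ p) (hk : 1 ≤ k0) (hs : 2 ≤ s) (ht : 2 ≤ t) :
    wspD p k0 b s + wspD p k0 b t + wspN p k0 b (2*(s+t)+1) + wspN p 1 b (s+t-3)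
      ≤ wspD p k0 b (s+t) := by
  have hq : ∀ k, 1 ≤ k → 3 ≤ p^k := fun k hk => hp.trans (Nat.le_self_pow (by omega) p)
  have h1 := Finset.sum_le_sum (s := Finset.Ico k0 b)
    (fun k hk' => wsp_W (p^k) s t (hq k (hk.trans (Finset.mem_Ico.1 hk').1)) hs ht)
  have h2 := Finset.sum_le_sum (s := Finset.Ico 1 b)
    (fun k hk' => wsp_U (p^k) s t (hq k (Finset.mem_Ico.1 hk').1) hs ht)
  simp only [Finset.sum_add_distrib] at h1 h2
  unfold wspD wspN
  omega

lemma wspD_le (p k0 b l : ℕ) (hl : 3 ≤ l) (h : (p = 3 ∧ k0 = 2) ∨ (5 ≤ p ∧ k0 = 1)) :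
    wspD p k0 b l ≤ l + l/2 := by
  have hU : ∑ k ∈ Finset.Ico 1 b, (l-3)/p^k ≤ (l-3)/2 :=
    (Nat.geom_sum_Ico_le (by omega) _ _).trans (Nat.div_le_div_left (by omega) (by omega))
  have hW : ∑ k ∈ Finset.Ico k0 b, ((4*l+2)/p^k - 1) ≤ l + 1 := by
    refine (Finset.sum_le_sum (fun k _ => Nat.sub_le _ 1)).trans ?_
    rcases h with ⟨rfl, rfl⟩ | ⟨h5, rfl⟩
    · rcases Nat.lt_or_ge b 2 with hb | hb
      · rw [Finset.Ico_eq_empty (by omega)]; simp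
      obtain ⟨b, rfl⟩ : ∃ c, b = c + 1 := ⟨b-1, by omega⟩
      rw [← Finset.sum_Ico_add' (fun k => (4*l+2)/3^k) 1 b 1]
      have : ∀ k, (4*l+2)/3^(k+1) = ((4*l+2)/3)/3^k := fun k => by
        rw [pow_succ', Nat.div_div_eq_div_mul]
      simp only [this]
      refine (Nat.geom_sum_Ico_le (by omega) _ _).trans ?_
      omega
    · refine (Nat.geom_sum_Ico_le (by omega) _ _).trans ?_
      refine (Nat.div_le_div_left (c := 4) (by omega) (by omega)).trans ?_
      omega
  unfold wspD
  omega

lemma wsp_norm_nat (p : ℕ) [hp : Fact p.Prime] (n b : ℕ) (hn : 0 < n) (hb : n < b) :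
    ‖(n : ℚ_[p])⁻¹‖ = (p : ℝ)^(wspN p 1 b n) := by
  have hlog : Nat.log p n < b := (Nat.log_le_self p n).trans_lt hb
  have h1 := Nat.emultiplicity_eq_card_pow_dvd hp.out.ne_one hn hlog
  have h2 : padicValNat p n = wspN p 1 b n := by
    rw [← padicValNat_eq_emultiplicity hn.ne'] at h1
    rw [wspN, ← Finset.card_filter]
    exact_mod_cast h1
  rw [norm_inv, Padic.norm_eq_zpow_neg_valuation (by exact_mod_cast hn.ne'),
    Padic.valuation_natCast, h2]
  simp

lemma wsp_norm3 (p k0 : ℕ) [hp : Fact p.Prime] (h : (p = 3 ∧ k0 = 2) ∨ (5 ≤ p ∧ k0 = 1))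
    (n b : ℕ) (hn : 0 < n) (hb : n < b) :
    ‖(3 : ℚ_[p]) * (n : ℚ_[p])⁻¹‖ ≤ (p : ℝ)^(wspN p k0 b n) := by
  rw [norm_mul, wsp_norm_nat p n b hn hb]
  rcases h with ⟨rfl, rfl⟩ | ⟨h5, rfl⟩
  · have : ‖(3 : ℚ_[3])‖ = 3⁻¹ := by simpa using Padic.norm_p (p := 3)
    rw [this]
    have h1 : wspN 3 1 b n ≤ wspN 3 2 b n + 1 := by
      rcases Nat.lt_or_ge 1 b with hb' | hb'
      · unfold wspN
        rw [Finset.sum_eq_sum_Ico_succ_bot hb', show 1 + 1 = 2 from rfl]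
        split_ifs <;> omega
      · omega
    have h2 : ((3:ℕ):ℝ)^(wspN 3 1 b n) ≤ ((3:ℕ):ℝ)^(wspN 3 2 b n + 1) :=
      pow_le_pow_right₀ (by norm_num) h1
    rw [pow_succ] at h2
    push_cast at h2 ⊢
    linarith
  · have : ‖(3 : ℚ_[p])‖ ≤ 1 := by simpa using Padic.norm_int_le_one (p := p) 3
    exact mul_le_of_le_one_left (by positivity) this

lemma wsp_base (p k0 : ℕ) [hp : Fact p.Prime] (h : (p = 3 ∧ k0 = 2) ∨ (5 ≤ p ∧ k0 = 1))
    (l b : ℕ) (hb : 2 ≤ b) (hl : (2*l+1).Prime) (hl' : 2 ≤ l) (x : ℤ_[p]) :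
    ‖-(x : ℚ_[p]) / ((2*l+1 : ℕ) : ℚ_[p])‖ ≤ (p : ℝ)^(wspD p k0 b l) := by
  have hx : ‖(x : ℚ_[p])‖ ≤ 1 := x.2
  have hp1 : (1:ℝ) ≤ p := by exact_mod_cast hp.out.one_le
  rw [norm_div, norm_neg]
  by_cases hpl : p = 2*l+1
  · rw [← hpl, Padic.norm_p, div_inv_eq_mul]
    have hk : k0 = 1 := by omega
    have : 1 ≤ wspD p k0 b l := by
      subst hk
      unfold wspD
      have := Finset.single_le_sum (f := fun k => (4*l+2)/p^k - 1)
        (fun _ _ => Nat.zero_le _) (Finset.mem_Ico.2 ⟨le_refl 1, hb⟩)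
      have h2 : (4*l+2)/p^1 = 2 := by
        rw [pow_one, show 4*l+2 = p*2 by omega]
        exact Nat.mul_div_cancel_left _ (by omega)
      simp only [h2] at this
      omega
    calc ‖(x : ℚ_[p])‖ * p ≤ 1 * p := by gcongr
      _ = (p:ℝ)^1 := by simp
      _ ≤ _ := pow_le_pow_right₀ hp1 this
  · have : ‖((2*l+1 : ℕ) : ℚ_[p])‖ = 1 := by
      rw [Padic.norm_natCast_eq_one_iff]
      exact (Nat.coprime_primes hp.out hl).2 hpl
    rw [this, div_one]
    exact hx.trans (one_le_pow₀ hp1)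

lemma wsp_bound (p k0 : ℕ) [hp : Fact p.Prime] (h : (p = 3 ∧ k0 = 2) ∨ (5 ≤ p ∧ k0 = 1))
    (a b : ℤ_[p]) (c : ℕ → ℚ_[p])
    (h2 : c 2 = -(a : ℚ_[p]) / 5) (h3 : c 3 = -(b : ℚ_[p]) / 7)
    (hrec : ∀ l : ℕ, 4 ≤ l →
      c l = 3 / ((2 * (l : ℚ_[p]) + 1) * ((l : ℚ_[p]) - 3)) *
        ∑ s ∈ Finset.Icc 2 (l - 2), c s * c (l - s)) (B : ℕ) :
    ∀ l, 2 ≤ l → 2*l+1 < B → ‖c l‖ ≤ (p:ℝ)^(wspD p k0 B l) := by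
  intro l
  have hp1 : (1:ℝ) ≤ p := by exact_mod_cast hp.out.one_le
  induction l using Nat.strong_induction_on with
  | _ l ih =>
  intro hl hB
  rcases Nat.lt_or_ge l 4 with h4 | h4
  · obtain rfl | rfl : l = 2 ∨ l = 3 := by omega
    · rw [h2]
      simpa using wsp_base p k0 h 2 B (by omega) (by norm_num) (by omega) a
    · rw [h3]
      simpa using wsp_base p k0 h 3 B (by omega) (by norm_num) (by omega) b
  · rw [hrec l h4]
    have e : (3 : ℚ_[p]) / ((2 * (l : ℚ_[p]) + 1) * ((l : ℚ_[p]) - 3))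
        = (3 * ((2*l+1 : ℕ) : ℚ_[p])⁻¹) * ((l-3 : ℕ) : ℚ_[p])⁻¹ := by
      rw [Nat.cast_sub (by omega)]
      push_cast
      rw [div_eq_mul_inv, mul_inv, mul_assoc]
    rw [e, Finset.mul_sum]
    refine IsUltrametricDist.norm_sum_le_of_forall_le_of_nonneg (by positivity) ?_
    intro s hs
    rw [Finset.mem_Icc] at hs
    obtain ⟨t, rfl⟩ : ∃ t, l = s + t := ⟨l - s, by omega⟩
    rw [Nat.add_sub_cancel_left, norm_mul, norm_mul, norm_mul (c s)]
    have i1 := ih s (by omega) (by omega) (by omega)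
    have i2 := ih t (by omega) (by omega) (by omega)
    have i3 := wsp_norm3 p k0 h (2*(s+t)+1) B (by omega) hB
    have i4 := (wsp_norm_nat p (s+t-3) B (by omega) (by omega)).le
    calc _ ≤ ((p:ℝ)^(wspN p k0 B (2*(s+t)+1)) * (p:ℝ)^(wspN p 1 B (s+t-3))) *
          ((p:ℝ)^(wspD p k0 B s) * (p:ℝ)^(wspD p k0 B t)) := by gcongr
      _ = (p:ℝ)^(wspD p k0 B s + wspD p k0 B t + wspN p k0 B (2*(s+t)+1)
            + wspN p 1 B (s+t-3)) := by ring
      _ ≤ _ := pow_le_pow_right₀ hp1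
        (wspD_add p k0 B s t (by omega) (by omega) (by omega) (by omega))

/-- For an odd prime `p`, `a b ∈ ℤ_p`, and the sequence `c` given by the Weierstrass
recurrence, for every `z ∈ ℚ_p` with `‖z‖ ≤ 1/p` the sequences `l ↦ c l · z^(2l-2)`
and `l ↦ (l-1) · c l · z^(2l-3)` tend to `0`; in particular the series
`∑_{l ≥ 2} c l · z^(2l-2)` and `∑_{l ≥ 2} (l-1) · c l · z^(2l-3)` are summable in `ℚ_p`. -/
theorem weierstrass_series_summable_padic
    (p : ℕ) [Fact p.Prime] (hp : Odd p) (a b : ℤ_[p]) (c : ℕ → ℚ_[p])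
    (h2 : c 2 = -(a : ℚ_[p]) / 5) (h3 : c 3 = -(b : ℚ_[p]) / 7)
    (hrec : ∀ l : ℕ, 4 ≤ l →
      c l = 3 / ((2 * (l : ℚ_[p]) + 1) * ((l : ℚ_[p]) - 3)) *
        ∑ s ∈ Finset.Icc 2 (l - 2), c s * c (l - s))
    (z : ℚ_[p]) (hz : ‖z‖ ≤ 1 / p) :
    Filter.Tendsto (fun l : ℕ => c l * z ^ (2 * (l : ℤ) - 2)) Filter.atTop (nhds 0) ∧
    Filter.Tendsto (fun l : ℕ => ((l : ℚ_[p]) - 1) * c l * z ^ (2 * (l : ℤ) - 3))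
      Filter.atTop (nhds 0) ∧
    Summable (fun l : ℕ => c (l + 2) * z ^ (2 * ((l : ℤ) + 2) - 2)) ∧
    Summable (fun l : ℕ =>
      (((l : ℚ_[p]) + 2) - 1) * c (l + 2) * z ^ (2 * ((l : ℤ) + 2) - 3)) := by
  have hpp : p.Prime := Fact.out
  have hp1 : (1:ℝ) < p := by exact_mod_cast hpp.one_lt
  have hp0 : (0:ℝ) < p := by linarith
  obtain ⟨k0, hk⟩ : ∃ k0, (p = 3 ∧ k0 = 2) ∨ (5 ≤ p ∧ k0 = 1) := by
    have := hpp.two_le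
    obtain ⟨m, hm⟩ := hp
    by_cases h : p = 3
    · exact ⟨2, Or.inl ⟨h, rfl⟩⟩
    · exact ⟨1, Or.inr ⟨by omega, rfl⟩⟩
  have hc : ∀ l, 3 ≤ l → ‖c l‖ ≤ (p:ℝ)^(l + l/2) := fun l hl =>
    (wsp_bound p k0 hk a b c h2 h3 hrec (2*l+2) l (by omega) (by omega)).trans
      (pow_le_pow_right₀ hp1.le (wspD_le p k0 _ l hl hk))
  have hz1 : ‖z‖ ≤ 1 := hz.trans (by rw [div_le_one hp0]; exact hp1.le)
  have key : ∀ l, 3 ≤ l → ‖c l * z ^ (2*(l:ℤ)-3)‖ ≤ (p:ℝ)^3 * (1/p : ℝ)^(l/2) := by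
    intro l hl
    have e : 2*(l:ℤ)-3 = ((2*l-3 : ℕ) : ℤ) := by omega
    rw [e, zpow_natCast, norm_mul, norm_pow]
    calc _ ≤ (p:ℝ)^(l+l/2) * (1/p : ℝ)^(2*l-3) := by
          gcongr
          exact hc l hl
      _ ≤ _ := by
        rw [one_div, inv_pow, inv_pow, ← div_eq_mul_inv, ← div_eq_mul_inv,
          div_le_div_iff₀ (by positivity) (by positivity), ← pow_add, ← pow_add]
        exact pow_le_pow_right₀ hp1.le (by omega)
  have lim : Filter.Tendsto (fun l : ℕ => (p:ℝ)^3 * (1/p : ℝ)^(l/2)) Filter.atTop (nhds 0) := by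
    have h1 : Filter.Tendsto (fun l : ℕ => (1/p : ℝ)^l) Filter.atTop (nhds 0) :=
      tendsto_pow_atTop_nhds_zero_of_lt_one (by positivity) (by rw [div_lt_one hp0]; exact hp1)
    simpa using (h1.comp (Nat.tendsto_div_const_atTop (n := 2) (by norm_num))).const_mul ((p:ℝ)^3)
  have T1 : Filter.Tendsto (fun l : ℕ => c l * z ^ (2 * (l : ℤ) - 2)) Filter.atTop (nhds 0) := by
    refine squeeze_zero_norm' ?_ lim
    filter_upwards [Filter.eventually_ge_atTop 3] with l hl
    have e : z ^ (2*(l:ℤ)-2) = z ^ (2*(l:ℤ)-3) * z := by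
      rw [show 2*(l:ℤ)-2 = ((2*l-3 : ℕ) : ℤ) + 1 by omega,
        show 2*(l:ℤ)-3 = ((2*l-3 : ℕ) : ℤ) by omega, ← Nat.cast_succ, zpow_natCast, zpow_natCast,
        pow_succ]
    rw [e, ← mul_assoc, norm_mul]
    exact (mul_le_of_le_one_right (norm_nonneg _) hz1).trans (key l hl)
  have T2 : Filter.Tendsto (fun l : ℕ => ((l : ℚ_[p]) - 1) * c l * z ^ (2 * (l : ℤ) - 3))
      Filter.atTop (nhds 0) := by
    refine squeeze_zero_norm' ?_ lim
    filter_upwards [Filter.eventually_ge_atTop 3] with l hl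
    rw [mul_assoc, norm_mul]
    have : ‖(l : ℚ_[p]) - 1‖ ≤ 1 := by simpa using Padic.norm_int_le_one (p := p) ((l:ℤ) - 1)
    exact (mul_le_of_le_one_left (norm_nonneg _) this).trans (key l hl)
  refine ⟨T1, T2, ?_, ?_⟩
  · apply NonarchimedeanAddGroup.summable_of_tendsto_cofinite_zero
    rw [Nat.cofinite_eq_atTop]
    simpa [Function.comp_def] using T1.comp (Filter.tendsto_add_atTop_nat 2)
  · apply NonarchimedeanAddGroup.summable_of_tendsto_cofinite_zero
    rw [Nat.cofinite_eq_atTop]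
    simpa [Function.comp_def] using T2.comp (Filter.tendsto_add_atTop_nat 2)
end

section
/- For an odd prime p, elements a, b ∈ ℤ_p, and any nonzero z ∈ ℚ_p with ‖z‖_p ≤ 1/p, the p-adic values ℘(z) = z^{-2} + Σ_{l≥2} c_l·z^{2l-2} and D(z) = -z^{-3} + Σ_{l≥2} (l-1)·c_l·z^{2l-3} (defined via the convergent p-adic sums) satisfy the short Weierstrass equation D(z)^2 = ℘(z)^3 + a·℘(z) + b in ℚ_p; in other words, the point (℘(z), D(z)) lies on the elliptic curve y^2 = x^3 + a·x + b over ℚ_p. -/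
open PowerSeries in
theorem wp_coeff_theta {K : Type*} [Field K] (f : PowerSeries K) (n : ℕ) :
    coeff n (X * d⁄dX K f) = n * coeff n f := by
  cases n with
  | zero => simp
  | succ n => rw [coeff_succ_X_mul, coeff_derivative]; push_cast; ring

noncomputable def wpX {K : Type*} [Field K] (c : ℕ → K) : PowerSeries K :=
  PowerSeries.mk fun l => if l = 0 then 1 else if l = 1 then 0 else c l

noncomputable def wpY {K : Type*} [Field K] (c : ℕ → K) : PowerSeries K :=
  PowerSeries.mk fun l => ((l : K) - 1) * (if l = 0 then 1 else if l = 1 then 0 else c l)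

open PowerSeries in
theorem wp_theta_X {K : Type*} [Field K] (c : ℕ → K) :
    X * d⁄dX K (wpX c) = wpX c + wpY c := by
  ext n
  rw [wp_coeff_theta, map_add, wpX, wpY, coeff_mk, coeff_mk]
  ring

open PowerSeries in
theorem wp_theta_Y {K : Type*} [Field K] [CharZero K] (a : K) (c : ℕ → K)
    (h2 : c 2 = -a / 5)
    (hrec : ∀ l : ℕ, 4 ≤ l →
      c l = 3 / ((2 * (l : K) + 1) * ((l : K) - 3)) *
        ∑ s ∈ Finset.Icc 2 (l - 2), c s * c (l - s)) :
    2 * (X * d⁄dX K (wpY c)) = 3 * wpY c + 3 * (wpX c * wpX c) + C a * X ^ 2 := by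
  ext n
  have e2 : (2 : PowerSeries K) = C 2 := (map_ofNat C 2).symm
  have e3 : (3 : PowerSeries K) = C 3 := (map_ofNat C 3).symm
  rw [e2, e3, coeff_C_mul, wp_coeff_theta, map_add, map_add, coeff_C_mul, coeff_C_mul,
    coeff_C_mul, coeff_mul, Finset.Nat.sum_antidiagonal_eq_sum_range_succ_mk, wpX, wpY, coeff_X_pow]
  simp only [coeff_mk]
  match n with
  | 0 => simp
  | 1 => simp [Finset.sum_range_succ]
  | 2 => simp [Finset.sum_range_succ, h2]; ring
  | 3 => simp [Finset.sum_range_succ]; ring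
  | m + 4 =>
    have h := hrec (m + 4) (by omega)
    have hs : ∑ s ∈ Finset.Icc 2 (m + 4 - 2), c s * c (m + 4 - s) =
        ∑ i ∈ Finset.range (m + 1), c (i + 2) * c (m + 4 - (i + 2)) := by
      have : Finset.Icc 2 (m + 4 - 2) = Finset.Ico 2 (m + 3) := by ext; simp; omega
      rw [this, Finset.sum_Ico_eq_sum_range]
      refine Finset.sum_congr (by congr 1) fun i hi => ?_
      rw [add_comm 2 i]
    rw [hs] at h
    rw [Finset.sum_range_succ, Finset.sum_range_succ, Finset.sum_range_succ', Finset.sum_range_succ']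
    have hs2 : ∀ i ∈ Finset.range (m + 1),
      (if i + 1 + 1 = 0 then (1:K) else if i + 1 + 1 = 1 then 0 else c (i + 1 + 1)) *
        (if m + 4 - (i + 1 + 1) = 0 then 1 else if m + 4 - (i + 1 + 1) = 1 then 0 else c (m + 4 - (i + 1 + 1)))
        = c (i + 2) * c (m + 4 - (i + 2)) := by
      intro i hi
      rw [Finset.mem_range] at hi
      rw [if_neg (by omega), if_neg (by omega), if_neg (by omega), if_neg (by omega)]
    rw [Finset.sum_congr rfl hs2]
    have hA : (2 * ((m + 4 : ℕ) : K) + 1) ≠ 0 := by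
      have : ((2 * (m + 4) + 1 : ℕ) : K) ≠ 0 := Nat.cast_ne_zero.2 (by omega)
      exact_mod_cast this
    have hB : (((m + 4 : ℕ) : K) - 3) ≠ 0 := by
      have : ((m + 1 : ℕ) : K) ≠ 0 := Nat.cast_ne_zero.2 (by omega)
      intro h; apply this; push_cast at h ⊢; linear_combination h
    have h' : ((2 * ((m + 4 : ℕ) : K) + 1) * (((m + 4 : ℕ) : K) - 3)) * c (m + 4) =
        3 * ∑ i ∈ Finset.range (m + 1), c (i + 2) * c (m + 4 - (i + 2)) := by
      rw [h]; field_simp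
    have q1 : m + 4 - (m + 4) = 0 := by omega
    have q2 : m + 4 - (m + 3) = 1 := by omega
    simp [q2]
    push_cast at h'
    linear_combination h'

open PowerSeries in
theorem wp_curve {K : Type*} [Field K] [CharZero K] (a b : K) (c : ℕ → K)
    (h2 : c 2 = -a / 5) (h3 : c 3 = -b / 7)
    (hrec : ∀ l : ℕ, 4 ≤ l →
      c l = 3 / ((2 * (l : K) + 1) * ((l : K) - 3)) *
        ∑ s ∈ Finset.Icc 2 (l - 2), c s * c (l - s)) :
    wpY c * wpY c = wpX c * (wpX c * wpX c) + C a * (X ^ 2 * wpX c) + C b * X ^ 3 := by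
  have hX := wp_theta_X c
  have hY := wp_theta_Y a c h2 hrec
  set x := wpX c with hx
  set y := wpY c with hy
  rw [← sub_eq_zero]
  set E := y * y - (x * (x * x) + C a * (X ^ 2 * x) + C b * X ^ 3) with hE
  have hth : X * d⁄dX K E = 3 * E := by
    rw [hE]
    simp only [map_sub, map_add, Derivation.leibniz, derivative_C, derivative_X, smul_eq_mul,
      Derivation.leibniz_pow, nsmul_eq_mul]
    push_cast
    linear_combination (y) * hY - (3 * x ^ 2 + C a * X ^ 2) * hX
  ext n
  have hn := congrArg (coeff n) hth
  have e3 : (3 : PowerSeries K) = C 3 := (map_ofNat C 3).symm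
  rw [wp_coeff_theta, e3, coeff_C_mul] at hn
  by_cases h : n = 3
  · subst h
    have key : coeff 3 E = 0 := by
      rw [hE, map_sub, map_add, map_add, coeff_C_mul, coeff_C_mul, coeff_X_pow, coeff_X_pow_mul']
      simp only [coeff_mul, Finset.Nat.sum_antidiagonal_eq_sum_range_succ_mk, hx, hy, wpX, wpY, coeff_mk]
      simp [Finset.sum_range_succ, h3]
      ring
    rw [key, map_zero]
  · have : ((n : K) - 3) ≠ 0 := by
      rw [sub_ne_zero]; exact_mod_cast h
    rw [map_zero]
    apply (mul_eq_zero.1 (show ((n : K) - 3) * coeff n E = 0 by linear_combination hn)).resolve_left this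

open PowerSeries in
theorem wp_hurwitz (p : ℕ) [Fact p.Prime] (a b : ℤ_[p]) (T W : PowerSeries ℚ_[p])
    (hT0 : constantCoeff T = 0) (hW0 : constantCoeff W = 0)
    (hT : d⁄dX ℚ_[p] T = 1 - 2 * C (a : ℚ_[p]) * (T * W) - 3 * C (b : ℚ_[p]) * W ^ 2)
    (hW : d⁄dX ℚ_[p] W = 3 * T ^ 2 + C (a : ℚ_[p]) * W ^ 2) (f : PowerSeries ℚ_[p])
    (hf : f ∈ Algebra.adjoin ℤ_[p] {T, W}) (n : ℕ) :
    ‖((n.factorial : ℕ) : ℚ_[p]) * coeff n f‖ ≤ 1 := by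
  have hC : ∀ r : ℤ_[p], C (r : ℚ_[p]) ∈ Algebra.adjoin ℤ_[p] ({T, W} : Set (PowerSeries ℚ_[p])) := by
    intro r
    have := Subalgebra.algebraMap_mem (Algebra.adjoin ℤ_[p] ({T, W} : Set (PowerSeries ℚ_[p]))) r
    rwa [PowerSeries.algebraMap_apply] at this
  have hTm : T ∈ Algebra.adjoin ℤ_[p] ({T, W} : Set (PowerSeries ℚ_[p])) :=
    Algebra.subset_adjoin (by simp)
  have hWm : W ∈ Algebra.adjoin ℤ_[p] ({T, W} : Set (PowerSeries ℚ_[p])) :=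
    Algebra.subset_adjoin (by simp)
  have h2m : (2 : PowerSeries ℚ_[p]) ∈ Algebra.adjoin ℤ_[p] ({T, W} : Set (PowerSeries ℚ_[p])) :=
    ofNat_mem _ 2
  have h3m : (3 : PowerSeries ℚ_[p]) ∈ Algebra.adjoin ℤ_[p] ({T, W} : Set (PowerSeries ℚ_[p])) :=
    ofNat_mem _ 3
  have hd : ∀ g ∈ Algebra.adjoin ℤ_[p] ({T, W} : Set (PowerSeries ℚ_[p])),
      d⁄dX ℚ_[p] g ∈ Algebra.adjoin ℤ_[p] ({T, W} : Set (PowerSeries ℚ_[p])) := by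
    intro g hg
    induction hg using Algebra.adjoin_induction with
    | mem x hx =>
      rcases hx with rfl | rfl
      · rw [hT]
        exact sub_mem (sub_mem (one_mem _) (mul_mem (mul_mem h2m (hC a)) (mul_mem hTm hWm)))
          (mul_mem (mul_mem h3m (hC b)) (pow_mem hWm 2))
      · rw [hW]
        exact add_mem (mul_mem h3m (pow_mem hTm 2)) (mul_mem (hC a) (pow_mem hWm 2))
    | algebraMap r =>
      have : algebraMap ℤ_[p] (PowerSeries ℚ_[p]) r = C (r : ℚ_[p]) := PowerSeries.algebraMap_apply
      rw [this, derivative_C]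
      exact zero_mem _
    | add x y hx hy ihx ihy => rw [map_add]; exact add_mem ihx ihy
    | mul x y hx hy ihx ihy =>
      rw [Derivation.leibniz, smul_eq_mul, smul_eq_mul]
      exact add_mem (mul_mem hx ihy) (mul_mem hy ihx)
  have hc : ∀ g ∈ Algebra.adjoin ℤ_[p] ({T, W} : Set (PowerSeries ℚ_[p])),
      ‖constantCoeff g‖ ≤ 1 := by
    intro g hg
    induction hg using Algebra.adjoin_induction with
    | mem x hx =>
      rcases hx with rfl | rfl
      · rw [hT0]; simp
      · rw [hW0]; simp
    | algebraMap r =>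
      have : algebraMap ℤ_[p] (PowerSeries ℚ_[p]) r = C (r : ℚ_[p]) := PowerSeries.algebraMap_apply
      rw [this, constantCoeff_C]
      exact PadicInt.norm_le_one r
    | add x y hx hy ihx ihy =>
      rw [map_add]; exact (IsUltrametricDist.norm_add_le_max _ _).trans (max_le ihx ihy)
    | mul x y hx hy ihx ihy =>
      rw [map_mul, norm_mul]; exact mul_le_one₀ ihx (norm_nonneg _) ihy
  have hi : ∀ k, (d⁄dX ℚ_[p])^[k] f ∈ Algebra.adjoin ℤ_[p] ({T, W} : Set (PowerSeries ℚ_[p])) := by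
    intro k
    induction k with
    | zero => exact hf
    | succ k ih => rw [Function.iterate_succ_apply']; exact hd _ ih
  have := hc _ (hi n)
  rw [constantCoeff_iterate_derivative] at this
  simpa using this

open PowerSeries in
theorem wp_theta_expand {K : Type*} [Field K] (f : PowerSeries K) :
    X * d⁄dX K (expand 2 two_ne_zero f) = 2 * expand 2 two_ne_zero (X * d⁄dX K f) := by
  ext n
  have e2 : (2 : PowerSeries K) = C 2 := (map_ofNat C 2).symm
  rw [wp_coeff_theta, e2, coeff_C_mul, coeff_expand, coeff_expand]
  split_ifs with h
  · obtain ⟨m, rfl⟩ := h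
    rw [Nat.mul_div_cancel_left _ two_pos, wp_coeff_theta]
    push_cast; ring
  · simp

theorem wp_fact (p : ℕ) [Fact p.Prime] (hp : Odd p) (n : ℕ) (q : ℚ_[p])
    (h : ‖(((n+1).factorial : ℕ) : ℚ_[p]) * q‖ ≤ 1) : ‖q‖ ^ 2 ≤ (p : ℝ) ^ n := by
  have hp1 := (Fact.out : p.Prime).two_le
  have hp3 : 3 ≤ p := by rcases hp with ⟨k, rfl⟩; omega
  have h1 := sub_one_mul_padicValNat_factorial_lt_of_ne_zero p (n := n + 1) (by omega)
  set v := padicValNat p (n+1).factorial with hv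
  have h2 : 2 * v ≤ n := by
    have : 2 * v ≤ (p - 1) * v := Nat.mul_le_mul_right _ (by omega)
    omega
  have hpp : (0:ℝ) < p := by positivity
  have h3 : ‖(((n+1).factorial : ℕ) : ℚ_[p])‖ = ((p : ℝ) ^ v)⁻¹ := by
    rw [Padic.norm_eq_zpow_neg_valuation (by exact_mod_cast (n+1).factorial_ne_zero),
      Padic.valuation_natCast, zpow_neg, zpow_natCast]
  rw [norm_mul, h3, inv_mul_le_iff₀ (by positivity), mul_one] at h
  calc ‖q‖ ^ 2 ≤ ((p : ℝ) ^ v) ^ 2 := by gcongr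
    _ = (p : ℝ) ^ (2 * v) := by rw [← pow_mul, mul_comm]
    _ ≤ (p : ℝ) ^ n := pow_le_pow_right₀ (by exact_mod_cast (by omega)) h2

open PowerSeries in
theorem wp_mul_bound (p : ℕ) [Fact p.Prime] (r : ℝ) (hr : 0 ≤ r) (f g : PowerSeries ℚ_[p])
    (hf : ∀ n, ‖coeff n f‖ ≤ r ^ n) (hg : ∀ n, ‖coeff n g‖ ≤ r ^ n) (n : ℕ) :
    ‖coeff n (f * g)‖ ≤ r ^ n := by
  rw [coeff_mul]
  refine IsUltrametricDist.norm_sum_le_of_forall_le_of_nonneg (by positivity) ?_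
  rintro ⟨i, j⟩ hij
  rw [Finset.HasAntidiagonal.mem_antidiagonal] at hij
  simp only at hij
  rw [norm_mul, ← hij, pow_add]
  exact mul_le_mul (hf i) (hg j) (norm_nonneg _) (by positivity)

open PowerSeries in
theorem wp_inv_bound (p : ℕ) [Fact p.Prime] (r : ℝ) (hr : 0 ≤ r) (f g : PowerSeries ℚ_[p])
    (hfg : f * g = 1) (hg0 : ‖coeff 0 g‖ = 1) (hg : ∀ n, ‖coeff n g‖ ≤ r ^ n) (n : ℕ) :
    ‖coeff n f‖ ≤ r ^ n := by
  induction n using Nat.strong_induction_on with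
  | _ n ih =>
    have h := congrArg (coeff n) hfg
    rw [coeff_mul, Finset.Nat.sum_antidiagonal_eq_sum_range_succ_mk, Finset.sum_range_succ,
      Nat.sub_self, coeff_one] at h
    have h' : coeff n f * coeff 0 g = (if n = 0 then 1 else 0) -
      ∑ i ∈ Finset.range n, coeff i f * coeff (n - i) g := by rw [← h]; ring
    have hn : ‖coeff n f‖ = ‖coeff n f * coeff 0 g‖ := by rw [norm_mul, hg0, mul_one]
    rw [hn, h', sub_eq_add_neg]
    refine (IsUltrametricDist.norm_add_le_max _ _).trans (max_le ?_ ?_)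
    · split_ifs with h0
      · subst h0; simp
      · rw [norm_zero]; positivity
    · rw [norm_neg]
      refine IsUltrametricDist.norm_sum_le_of_forall_le_of_nonneg (by positivity) ?_
      intro i hi
      rw [Finset.mem_range] at hi
      rw [norm_mul]
      calc _ ≤ r ^ i * r ^ (n - i) := mul_le_mul (ih i hi) (hg _) (norm_nonneg _) (by positivity)
        _ = r ^ n := by rw [← pow_add]; congr 1; omega

open PowerSeries in
theorem wp_bounds (p : ℕ) [Fact p.Prime] (hp : Odd p) (a b : ℤ_[p]) (c : ℕ → ℚ_[p])
    (h2 : c 2 = -(a : ℚ_[p]) / 5) (h3 : c 3 = -(b : ℚ_[p]) / 7)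
    (hrec : ∀ l : ℕ, 4 ≤ l →
      c l = 3 / ((2 * (l : ℚ_[p]) + 1) * ((l : ℚ_[p]) - 3)) *
        ∑ s ∈ Finset.Icc 2 (l - 2), c s * c (l - s))
    (r : ℝ) (hr : 0 ≤ r) (hr4 : r ^ 4 = (p : ℝ) ^ 3) (n : ℕ) :
    ‖coeff n (wpX c)‖ ≤ (r ^ 2) ^ n ∧ ‖coeff n (wpY c)‖ ≤ (r ^ 2) ^ n := by
  have hX : X * d⁄dX ℚ_[p] (expand 2 two_ne_zero (wpX c)) =
      2 * expand 2 two_ne_zero (wpX c) + 2 * expand 2 two_ne_zero (wpY c) := by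
    rw [wp_theta_expand, wp_theta_X, map_add, mul_add]
  have hY : X * d⁄dX ℚ_[p] (expand 2 two_ne_zero (wpY c)) =
      3 * expand 2 two_ne_zero (wpY c) +
        3 * (expand 2 two_ne_zero (wpX c) * expand 2 two_ne_zero (wpX c)) +
        C (a : ℚ_[p]) * X ^ 4 := by
    have h := congrArg (expand 2 two_ne_zero) (wp_theta_Y _ c h2 hrec)
    rw [map_mul, map_ofNat] at h
    rw [wp_theta_expand, h]
    simp only [map_add, map_mul, map_ofNat, expand_C, map_pow, expand_X]
    ring
  have hE : expand 2 two_ne_zero (wpY c) ^ 2 = expand 2 two_ne_zero (wpX c) ^ 3 +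
      C (a : ℚ_[p]) * X ^ 4 * expand 2 two_ne_zero (wpX c) + C (b : ℚ_[p]) * X ^ 6 := by
    have h := congrArg (expand 2 two_ne_zero) (wp_curve _ _ c h2 h3 hrec)
    simp only [map_add, map_mul, expand_C, map_pow, expand_X] at h
    linear_combination h
  have hx2 : ∀ n, coeff n (wpX c) = coeff (2 * n) (expand 2 two_ne_zero (wpX c)) := by simp
  have hy2 : ∀ n, coeff n (wpY c) = coeff (2 * n) (expand 2 two_ne_zero (wpY c)) := by simp
  have y0 : coeff 0 (expand 2 two_ne_zero (wpY c)) = -1 := by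
    rw [coeff_expand]; simp [wpY]
  have y1 : coeff 1 (expand 2 two_ne_zero (wpY c)) = 0 := by
    rw [coeff_expand]; simp
  have y2 : coeff 2 (expand 2 two_ne_zero (wpY c)) = 0 := by
    rw [coeff_expand]; simp [wpY]
  have y3 : coeff 3 (expand 2 two_ne_zero (wpY c)) = 0 := by
    rw [coeff_expand]; simp
  rw [hx2, hy2, ← pow_mul]
  generalize expand 2 two_ne_zero (wpX c) = x at *
  generalize expand 2 two_ne_zero (wpY c) = y at *
  clear hx2 hy2
  have hyv : y * y⁻¹ = 1 := PowerSeries.mul_inv_cancel _ (by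
    rw [← coeff_zero_eq_constantCoeff_apply, y0]; simp)
  have hdv : d⁄dX ℚ_[p] y⁻¹ = -y⁻¹ ^ 2 * d⁄dX ℚ_[p] y := derivative_inv' y
  generalize y⁻¹ = v at *
  have hv : ∀ k, coeff k (y * v) = coeff k 1 := fun k => by rw [hyv]
  have hv0 := hv 0
  have hv1 := hv 1
  have hv2 := hv 2
  have hv3 := hv 3
  simp only [coeff_mul, Finset.Nat.sum_antidiagonal_eq_sum_range_succ_mk, Finset.sum_range_succ,
    Finset.sum_range_zero, y0, y1, y2, y3, coeff_one] at hv0 hv1 hv2 hv3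
  norm_num at hv0 hv1 hv2 hv3
  have hv0' : coeff 0 v = -1 := by
    rw [coeff_zero_eq_constantCoeff_apply]; linear_combination -hv0
  have hXne : (X : PowerSeries ℚ_[p]) ≠ 0 := X_ne_zero
  have H := wp_hurwitz p a b (-(X * (x * v))) (-(X ^ 3 * v)) (by simp) (by simp)
    (by
      apply mul_left_cancel₀ hXne
      simp only [map_neg, Derivation.leibniz, derivative_X, smul_eq_mul, Derivation.leibniz_pow,
        nsmul_eq_mul, hdv]
      linear_combination X * x * v ^ 2 * hY - X * v * hX - 3 * X * v ^ 2 * hE +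
        X * (3 * x * v - 2 + 3 * (v * y + 1)) * hyv)
    (by
      apply mul_left_cancel₀ hXne
      simp only [map_neg, Derivation.leibniz, derivative_X, smul_eq_mul, Derivation.leibniz_pow,
        nsmul_eq_mul, hdv]
      push_cast
      linear_combination X ^ 3 * v ^ 2 * hY + 3 * X ^ 3 * v * hyv)
  have hp1 : (1 : ℝ) ≤ p := by exact_mod_cast (Fact.out : p.Prime).one_lt.le
  have hpow : ∀ (q : ℚ_[p]) (n m : ℕ), ‖q‖ ^ 2 ≤ (p : ℝ) ^ m → 2 * m ≤ 3 * n → ‖q‖ ≤ r ^ n := by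
    intro q n m h hm
    refine le_of_pow_le_pow_left₀ (n := 4) (by norm_num) (by positivity) ?_
    calc ‖q‖ ^ 4 = (‖q‖ ^ 2) ^ 2 := by ring
      _ ≤ ((p : ℝ) ^ m) ^ 2 := by gcongr
      _ = (p : ℝ) ^ (2 * m) := by rw [← pow_mul, mul_comm]
      _ ≤ (p : ℝ) ^ (3 * n) := pow_le_pow_right₀ hp1 hm
      _ = (r ^ n) ^ 4 := by rw [pow_mul, ← hr4, ← pow_mul, ← pow_mul, mul_comm]
  have hT : ∀ n, ‖coeff n (x * v)‖ ≤ r ^ n := by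
    intro n
    have h := H _ (Algebra.subset_adjoin (Set.mem_insert _ _)) (n + 1)
    rw [map_neg, coeff_succ_X_mul, mul_neg, norm_neg] at h
    have h := wp_fact p hp n _ h
    exact hpow _ _ _ h (by omega)
  have hV : ∀ n, ‖coeff n v‖ ≤ r ^ n := by
    intro n
    have h := H _ (Algebra.subset_adjoin (Set.mem_insert_of_mem _ rfl)) (n + 3)
    rw [map_neg, coeff_X_pow_mul, mul_neg, norm_neg] at h
    have h := wp_fact p hp (n + 2) _ h
    by_cases hn : 4 ≤ n
    · exact hpow _ _ _ h (by omega)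
    · interval_cases n
      · rw [hv0']; simp
      · rw [hv1, norm_zero]; positivity
      · rw [hv2, norm_zero]; positivity
      · rw [hv3, norm_zero]; positivity
  have hYb := wp_inv_bound p r hr y v hyv (by rw [hv0']; simp) hV
  refine ⟨?_, hYb _⟩
  have : x = (x * v) * y := by linear_combination -x * hyv
  rw [this]
  exact wp_mul_bound p r hr _ _ hT hYb _

open PowerSeries in
theorem wp_ev_mul {K : Type*} [NormedField K] [CompleteSpace K] (u : K) (f g : PowerSeries K)
    (hf : Summable fun n => ‖coeff n f * u ^ n‖) (hg : Summable fun n => ‖coeff n g * u ^ n‖) :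
    (Summable fun n => ‖coeff n (f * g) * u ^ n‖) ∧
    ∑' n, coeff n (f * g) * u ^ n = (∑' n, coeff n f * u ^ n) * ∑' n, coeff n g * u ^ n := by
  have e : ∀ n, coeff n (f * g) * u ^ n = ∑ kl ∈ Finset.HasAntidiagonal.antidiagonal n,
      (coeff kl.1 f * u ^ kl.1) * (coeff kl.2 g * u ^ kl.2) := by
    intro n
    rw [coeff_mul, Finset.sum_mul]
    refine Finset.sum_congr rfl ?_
    rintro ⟨i, j⟩ hij
    rw [Finset.HasAntidiagonal.mem_antidiagonal] at hij
    simp only at hij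
    rw [← hij, pow_add]
    ring
  simp only [e]
  have A := summable_norm_sum_mul_antidiagonal_of_summable_norm
    (f := fun n => coeff n f * u ^ n) (g := fun n => coeff n g * u ^ n) hf hg
  have B := tsum_mul_tsum_eq_tsum_sum_antidiagonal_of_summable_norm
    (f := fun n => coeff n f * u ^ n) (g := fun n => coeff n g * u ^ n) hf hg
  exact ⟨A, B.symm⟩

open PowerSeries in
theorem wp_ev_mon {K : Type*} [NormedField K] (u a : K) (k : ℕ) :
    (Summable fun n => ‖coeff n (C a * X ^ k) * u ^ n‖) ∧
    ∑' n, coeff n (C a * X ^ k) * u ^ n = a * u ^ k := by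
  have h0 : ∀ n, n ≠ k → coeff n (C a * X ^ k) * u ^ n = 0 := by
    intro n hn
    rw [coeff_C_mul, coeff_X_pow, if_neg hn]; simp
  constructor
  · refine summable_of_ne_finset_zero (s := {k}) fun n hn => ?_
    rw [h0 n (by simpa using hn), norm_zero]
  · rw [tsum_eq_single k h0, coeff_C_mul, coeff_X_pow, if_pos rfl, mul_one]

/-- For an odd prime `p`, `a b ∈ ℤ_p`, and any nonzero `z ∈ ℚ_p` with `‖z‖ ≤ 1/p`,
the p-adic values `℘(z) = z⁻² + ∑_{l ≥ 2} c l · z^(2l-2)` and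
`D(z) = -z⁻³ + ∑_{l ≥ 2} (l-1) · c l · z^(2l-3)` satisfy the short Weierstrass
equation `D(z)² = ℘(z)³ + a·℘(z) + b` in `ℚ_p`. -/
theorem weierstrass_padic_point_on_curve
    (p : ℕ) [Fact p.Prime] (hp : Odd p) (a b : ℤ_[p]) (c : ℕ → ℚ_[p])
    (h2 : c 2 = -(a : ℚ_[p]) / 5) (h3 : c 3 = -(b : ℚ_[p]) / 7)
    (hrec : ∀ l : ℕ, 4 ≤ l →
      c l = 3 / ((2 * (l : ℚ_[p]) + 1) * ((l : ℚ_[p]) - 3)) *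
        ∑ s ∈ Finset.Icc 2 (l - 2), c s * c (l - s))
    (z : ℚ_[p]) (hz0 : z ≠ 0) (hz : ‖z‖ ≤ 1 / p)
    (P D : ℚ_[p])
    (hP : P = z ^ (-2 : ℤ) + ∑' l : ℕ, c (l + 2) * z ^ (2 * ((l : ℤ) + 2) - 2))
    (hD : D = -z ^ (-3 : ℤ) +
      ∑' l : ℕ, (((l : ℚ_[p]) + 2) - 1) * c (l + 2) * z ^ (2 * ((l : ℤ) + 2) - 3)) :
    D ^ 2 = P ^ 3 + (a : ℚ_[p]) * P + (b : ℚ_[p]) := by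
  have hp3 : (3 : ℝ) ≤ p := by
    have := (Fact.out : p.Prime).two_le
    have h3p : 3 ≤ p := by rcases hp with ⟨k, rfl⟩; omega
    exact_mod_cast h3p
  have hB := wp_bounds p hp a b c h2 h3 hrec (√(√((p : ℝ) ^ 3))) (by positivity) (by
    rw [show (4 : ℕ) = 2 * 2 from rfl, pow_mul, Real.sq_sqrt (by positivity),
      Real.sq_sqrt (by positivity)])
  have hE := wp_curve _ _ c h2 h3 hrec
  rw [Real.sq_sqrt (by positivity)] at hB
  have hq1 : √((p : ℝ) ^ 3) * ‖z ^ 2‖ < 1 := by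
    have h1 : √((p : ℝ) ^ 3) < (p : ℝ) ^ 2 := by
      rw [Real.sqrt_lt' (by positivity), ← pow_mul]
      exact pow_lt_pow_right₀ (by linarith) (by norm_num)
    have h2 : ‖z ^ 2‖ ≤ ((p : ℝ) ^ 2)⁻¹ := by
      rw [norm_pow, ← inv_pow, ← one_div]
      gcongr
    calc √((p : ℝ) ^ 3) * ‖z ^ 2‖ ≤ √((p : ℝ) ^ 3) * ((p : ℝ) ^ 2)⁻¹ := by gcongr
      _ < (p : ℝ) ^ 2 * ((p : ℝ) ^ 2)⁻¹ := by gcongr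
      _ = 1 := mul_inv_cancel₀ (by positivity)
  have hsum : ∀ f : PowerSeries ℚ_[p],
      (∀ n, ‖PowerSeries.coeff n f‖ ≤ (√((p : ℝ) ^ 3)) ^ n) →
      Summable fun n => ‖PowerSeries.coeff n f * (z ^ 2) ^ n‖ := by
    intro f hf
    refine Summable.of_nonneg_of_le (fun _ => norm_nonneg _) (fun n => ?_)
      (summable_geometric_of_lt_one (by positivity) hq1)
    rw [norm_mul, mul_pow, norm_pow (z ^ 2)]
    gcongr
    exact hf n
  have hx := hsum (wpX c) fun n => (hB n).1
  have hy := hsum (wpY c) fun n => (hB n).2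
  obtain ⟨syy, eyy⟩ := wp_ev_mul (z ^ 2) _ _ hy hy
  obtain ⟨sxx, exx⟩ := wp_ev_mul (z ^ 2) _ _ hx hx
  obtain ⟨sxxx, exxx⟩ := wp_ev_mul (z ^ 2) _ _ hx sxx
  obtain ⟨sa, ea⟩ := wp_ev_mon (z ^ 2) (a : ℚ_[p]) 2
  obtain ⟨sb, eb⟩ := wp_ev_mon (z ^ 2) (b : ℚ_[p]) 3
  obtain ⟨sax, eax⟩ := wp_ev_mul (z ^ 2) _ _ sa hx
  rw [← mul_assoc (PowerSeries.C (a : ℚ_[p]))] at hE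
  have key : (∑' n, PowerSeries.coeff n (wpY c) * (z ^ 2) ^ n) ^ 2 =
      (∑' n, PowerSeries.coeff n (wpX c) * (z ^ 2) ^ n) ^ 3 +
      a * z ^ 4 * (∑' n, PowerSeries.coeff n (wpX c) * (z ^ 2) ^ n) + b * z ^ 6 := by
    rw [pow_two, ← eyy, hE]
    simp only [map_add, add_mul]
    rw [(sxxx.of_norm.add sax.of_norm).tsum_add sb.of_norm, sxxx.of_norm.tsum_add sax.of_norm,
      exxx, exx, eax, ea, eb]
    ring
  have hP' : P * z ^ 2 = ∑' n, PowerSeries.coeff n (wpX c) * (z ^ 2) ^ n := by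
    rw [← hx.of_norm.sum_add_tsum_nat_add 2, hP, add_mul, ← tsum_mul_right]
    congr 1
    · simp [Finset.sum_range_succ, wpX, hz0, zpow_neg]
    · refine tsum_congr fun l => ?_
      rw [wpX, PowerSeries.coeff_mk, if_neg (by omega), if_neg (by omega), mul_assoc,
        ← zpow_natCast z 2, ← zpow_add₀ hz0, ← zpow_natCast, ← zpow_mul]
      congr 2
      push_cast; ring
  have hD' : D * z ^ 3 = ∑' n, PowerSeries.coeff n (wpY c) * (z ^ 2) ^ n := by
    rw [← hy.of_norm.sum_add_tsum_nat_add 2, hD, add_mul, ← tsum_mul_right]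
    congr 1
    · simp [Finset.sum_range_succ, wpY, hz0, zpow_neg]
    · refine tsum_congr fun l => ?_
      rw [wpY, PowerSeries.coeff_mk, if_neg (by omega), if_neg (by omega), mul_assoc,
        ← zpow_natCast z 3, ← zpow_add₀ hz0, ← zpow_natCast z 2, ← zpow_natCast, ← zpow_mul]
      push_cast
      congr 2
      ring
  rw [← hP', ← hD'] at key
  have hz6 : z ^ 6 ≠ 0 := pow_ne_zero _ hz0
  apply mul_right_cancel₀ hz6
  linear_combination key
end
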